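/- Let ≤ be an embedding order on A*. If W = W₁W₂⋯W_k is an incompatible factorisation, then I_W(x) = (∏_{i=1}^k I*_{W_i}(x)) / (1 − A(x)) as formal power series. -/

import Mathlib

/-!
A word containing `W` has a unique shortest prefix containing `W`, followed by an arbitrary word;
as the words have generating function `1 / (1 - A(x))`, this gives `I_W = I*_W / (1 - A)`.
If `U` ends and `R` starts with an incompatible pair, no letter of a container `V` of `UR` can
receive both the end of `U` and the start of `R`, so `V` splits into a container of `U` followed by
a container of `R`. Hence the minimal containers of `UR` are the concatenations of those of `U` with
those of `R`; minimal containers form a prefix code, so the concatenations are unambiguous and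
`I*_{UR} = I*_U I*_R`.
-/

/-- An embedding order on words over a weighted alphabet. -/
structure EmbeddingOrder (A : Type*) (w : A → ℕ) where
  le : List A → List A → Prop
  le_refl : ∀ W, le W W
  le_trans : ∀ {U V W}, le U V → le V W → le U W
  le_antisymm : ∀ {V W}, le V W → le W V → V = W
  nil_le : ∀ W, le [] W
  weight_lt : ∀ {W V}, le W V → W ≠ V → (W.map w).sum < (V.map w).sum
  le_iff_factor : ∀ W V, le W V ↔ ∃ Ws : List (List A),
    Ws.length = V.length ∧ Ws.flatten = W ∧ ∀ q ∈ Ws.zip V, le q.1 [q.2]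

/-- The weight of a word: the sum of the weights of its letters. -/
def wt {A : Type*} (w : A → ℕ) (W : List A) : ℕ := (W.map w).sum

/-- `V` is a *minimal container* of `W` (written `W ≤* V`): `W ≤ V` but `W ≰ P` for
every proper prefix `P` of `V`. -/
def MinContainer {A : Type*} {w : A → ℕ} (E : EmbeddingOrder A w) (W V : List A) : Prop :=
  E.le W V ∧ ∀ P : List A, P <+: V → P ≠ V → ¬ E.le W P

/-- The generating function `A(x) = Σ_{a ∈ A} x^{weight a}` of the alphabet,
as a formal power series (with integer coefficients). -/
noncomputable def Aser (A : Type*) (w : A → ℕ) : PowerSeries ℤ :=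
  PowerSeries.mk fun n => (Set.ncard {a : A | w a = n} : ℤ)

/-- `I_W(x) = Σ_{V : W ≤ V} x^{weight V}` as a formal power series. -/
noncomputable def Iser {A : Type*} (w : A → ℕ) (E : EmbeddingOrder A w) (W : List A) :
    PowerSeries ℤ :=
  PowerSeries.mk fun n => (Set.ncard {V : List A | E.le W V ∧ wt w V = n} : ℤ)

/-- `I*_W(x) = Σ_{V : W ≤* V} x^{weight V}` as a formal power series. -/
noncomputable def IserStar {A : Type*} (w : A → ℕ) (E : EmbeddingOrder A w) (W : List A) :
    PowerSeries ℤ :=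
  PowerSeries.mk fun n => (Set.ncard {V : List A | MinContainer E W V ∧ wt w V = n} : ℤ)


/-- The ordered pair `(a, b)` of letters is *incompatible* if there is no letter `c`
with `ab ≤ c`. -/
def Incompat {A : Type*} {w : A → ℕ} (E : EmbeddingOrder A w) (a b : A) : Prop :=
  ¬ ∃ c : A, E.le [a, b] [c]

/-- A factorisation (a list of nonempty factors) is *incompatible* if the last letter of
each factor together with the first letter of the next factor form an incompatible pair. -/
def IncompatFactorisation {A : Type*} {w : A → ℕ} (E : EmbeddingOrder A w)
    (Ws : List (List A)) : Prop :=
  (∀ U ∈ Ws, U ≠ []) ∧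
    Ws.Chain' fun U V => ∀ a b : A, U.getLast? = some a → V.head? = some b → Incompat E a b

section WeightSeries

variable {α β γ : Type*} {wα : α → ℕ} {wβ : β → ℕ} {wγ : γ → ℕ}

/-- The generating function `Σ_{a ∈ S} x^{weight a}` of a set of weighted objects. It is meaningful
when each weight is attained finitely often on `S`; an infinite level set contributes `0`. -/
noncomputable def weightSeries (weight : α → ℕ) (S : Set α) : PowerSeries ℤ :=
  PowerSeries.mk fun n => (Set.ncard {a | a ∈ S ∧ weight a = n} : ℤ)

theorem weightSeries_singleton (a : α) :
    weightSeries wα {a} = PowerSeries.X ^ wα a := by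
  ext n
  rw [weightSeries, PowerSeries.coeff_mk, PowerSeries.coeff_X_pow]
  split_ifs with hn
  · have : {b | b ∈ ({a} : Set α) ∧ wα b = n} = {a} := by ext b; aesop
    rw [this, Set.ncard_singleton, Nat.cast_one]
  · have : {b | b ∈ ({a} : Set α) ∧ wα b = n} = ∅ := by ext b; aesop
    rw [this, Set.ncard_empty, Nat.cast_zero]

theorem weightSeries_union {S T : Set α} (hST : Disjoint S T)
    (hS : ∀ n, {a | a ∈ S ∧ wα a = n}.Finite) (hT : ∀ n, {a | a ∈ T ∧ wα a = n}.Finite) :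
    weightSeries wα (S ∪ T) = weightSeries wα S + weightSeries wα T := by
  ext n
  have hunion : {a | a ∈ S ∪ T ∧ wα a = n} = {a | a ∈ S ∧ wα a = n} ∪ {a | a ∈ T ∧ wα a = n} :=
    Set.ext fun _ => or_and_right
  have hdisj : Disjoint {a | a ∈ S ∧ wα a = n} {a | a ∈ T ∧ wα a = n} :=
    hST.mono (fun _ h => h.1) (fun _ h => h.1)
  simp only [weightSeries, map_add, PowerSeries.coeff_mk]
  rw [hunion, Set.ncard_union_eq hdisj (hS n) (hT n), Nat.cast_add]

theorem weightSeries_image {S : Set α} {f : α → β} (hf : S.InjOn f)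
    (hw : ∀ a ∈ S, wβ (f a) = wα a) :
    weightSeries wβ (f '' S) = weightSeries wα S := by
  ext n
  have himage : {b | b ∈ f '' S ∧ wβ b = n} = f '' {a | a ∈ S ∧ wα a = n} := by
    ext b
    constructor
    · rintro ⟨⟨a, ha, rfl⟩, hn⟩
      exact ⟨a, ⟨ha, hw a ha ▸ hn⟩, rfl⟩
    · rintro ⟨a, ⟨ha, hn⟩, rfl⟩
      exact ⟨⟨a, ha, rfl⟩, (hw a ha).trans hn⟩
  rw [weightSeries, weightSeries, PowerSeries.coeff_mk, PowerSeries.coeff_mk, himage,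
    (hf.mono fun _ h => h.1).ncard_image]

theorem weightSeries_prod {S : Set α} {T : Set β}
    (hS : ∀ n, {a | a ∈ S ∧ wα a = n}.Finite) (hT : ∀ n, {b | b ∈ T ∧ wβ b = n}.Finite) :
    weightSeries (fun p : α × β => wα p.1 + wβ p.2) (S ×ˢ T) =
      weightSeries wα S * weightSeries wβ T := by
  ext n
  let level (k : ℕ × ℕ) : Set (α × β) := {a | a ∈ S ∧ wα a = k.1} ×ˢ {b | b ∈ T ∧ wβ b = k.2}
  have hlevel : {p | p ∈ S ×ˢ T ∧ wα p.1 + wβ p.2 = n} =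
      ⋃ k ∈ (Finset.HasAntidiagonal.antidiagonal n : Set (ℕ × ℕ)), level k := by
    ext ⟨a, b⟩
    simp only [level, Set.mem_ofPred_eq, Set.mem_prod, Set.mem_iUnion, Finset.mem_coe,
      Finset.HasAntidiagonal.mem_antidiagonal, exists_prop, Prod.exists]
    aesop
  have hdisj : (Finset.HasAntidiagonal.antidiagonal n : Set (ℕ × ℕ)).PairwiseDisjoint level := by
    refine fun k _ l _ hkl => Set.disjoint_left.2 fun p hk hl => hkl ?_
    exact Prod.ext (hk.1.2.symm.trans hl.1.2) (hk.2.2.symm.trans hl.2.2)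
  rw [PowerSeries.coeff_mul]
  simp only [weightSeries, PowerSeries.coeff_mk]
  rw [hlevel, (Finset.finite_toSet _).ncard_biUnion (fun k _ => (hS k.1).prod (hT k.2)) hdisj,
    finsum_mem_coe_finset, Nat.cast_sum]
  simp only [level, Set.ncard_prod, Nat.cast_mul]

theorem weightSeries_image2 {S : Set α} {T : Set β} {f : α → β → γ}
    (hf : (S ×ˢ T).InjOn (Function.uncurry f))
    (hw : ∀ a ∈ S, ∀ b ∈ T, wγ (f a b) = wα a + wβ b)
    (hS : ∀ n, {a | a ∈ S ∧ wα a = n}.Finite) (hT : ∀ n, {b | b ∈ T ∧ wβ b = n}.Finite) :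
    weightSeries wγ (Set.image2 f S T) = weightSeries wα S * weightSeries wβ T := by
  rw [← weightSeries_prod hS hT, ← Set.image_uncurry_prod]
  exact weightSeries_image hf fun p hp => hw p.1 hp.1 p.2 hp.2

end WeightSeries

section Words

variable {A : Type*} {w : A → ℕ}

theorem wt_cons (a : A) (V : List A) : wt w (a :: V) = w a + wt w V := by
  simp only [wt, List.map_cons, List.sum_cons]

theorem wt_append (U V : List A) : wt w (U ++ V) = wt w U + wt w V := by
  simp only [wt, List.map_append, List.sum_append]

theorem finite_wt_eq (hw : ∀ a, 0 < w a) (hfin : ∀ n, {a | w a = n}.Finite) (n : ℕ) :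
    {V : List A | wt w V = n}.Finite := by
  induction n using Nat.strong_induction_on with
  | _ n ih =>
    refine ((Set.finite_singleton []).union ((Set.finite_Iio n).biUnion fun m hm =>
      (hfin (n - m)).image2 List.cons (ih m hm))).subset ?_
    rintro (_ | ⟨a, V⟩) hV
    · exact .inl rfl
    · have hn : w a + wt w V = n := (wt_cons a V).symm.trans hV
      have hlt : wt w V < n := by have := hw a; omega
      exact .inr (Set.mem_biUnion hlt ⟨a, by simp only [Set.mem_ofPred_eq]; omega, V, rfl, rfl⟩)

theorem weightSeries_nil : weightSeries (wt w) {[]} = 1 :=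
  (weightSeries_singleton []).trans (pow_zero _)

theorem weightSeries_words_mul_one_sub_Aser (hw : ∀ a, 0 < w a)
    (hfin : ∀ n, {a | w a = n}.Finite) :
    weightSeries (wt w) Set.univ * (1 - Aser A w) = 1 := by
  have hwords (S : Set (List A)) (n : ℕ) : {V | V ∈ S ∧ wt w V = n}.Finite :=
    (finite_wt_eq hw hfin n).subset fun _ h => h.2
  have huniv : (Set.univ : Set (List A)) = {[]} ∪ Set.image2 List.cons Set.univ Set.univ := by
    ext (_ | ⟨a, V⟩) <;> simp
  have hdisj : Disjoint {[]} (Set.image2 (List.cons (α := A)) Set.univ Set.univ) := by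
    simp
  have hcons : (Set.univ ×ˢ Set.univ).InjOn (Function.uncurry (List.cons (α := A))) := by
    rintro ⟨a, V⟩ - ⟨b, V'⟩ - h
    exact Prod.ext (List.cons.inj h).1 (List.cons.inj h).2
  have hletters : weightSeries w Set.univ = Aser A w := by
    simp only [weightSeries, Aser, Set.mem_univ, true_and]
  have hrec : weightSeries (wt w) Set.univ = 1 + Aser A w * weightSeries (wt w) Set.univ := by
    conv_lhs => rw [huniv]
    rw [weightSeries_union hdisj (hwords _) (hwords _), weightSeries_nil,
      weightSeries_image2 hcons (fun a _ V _ => wt_cons a V)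
        (fun n => (hfin n).subset fun _ h => h.2) (hwords _), hletters]
  linear_combination hrec

theorem injOn_append_of_isAntichain_prefix {S : Set (List A)} (hS : IsAntichain (· <+: ·) S)
    (T : Set (List A)) : (S ×ˢ T).InjOn (Function.uncurry (· ++ ·)) := by
  rintro ⟨P, Q⟩ ⟨hP, -⟩ ⟨P', Q'⟩ ⟨hP', -⟩ (h : P ++ Q = P' ++ Q')
  have hPP' : P = P' := by
    rcases List.prefix_or_prefix_of_prefix (h ▸ List.prefix_append P Q)
      (List.prefix_append P' Q') with hle | hle
    · exact hS.eq hP hP' hle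
    · exact hS.eq' hP hP' hle
  subst hPP'
  exact Prod.ext rfl (List.append_cancel_left h)

theorem weightSeries_image2_append (hw : ∀ a, 0 < w a) (hfin : ∀ n, {a | w a = n}.Finite)
    {S : Set (List A)} (hS : IsAntichain (· <+: ·) S) (T : Set (List A)) :
    weightSeries (wt w) (Set.image2 (· ++ ·) S T) =
      weightSeries (wt w) S * weightSeries (wt w) T :=
  weightSeries_image2 (injOn_append_of_isAntichain_prefix hS T)
    (fun U _ V _ => wt_append U V)
    (fun n => (finite_wt_eq hw hfin n).subset fun _ h => h.2)
    (fun n => (finite_wt_eq hw hfin n).subset fun _ h => h.2)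

end Words

section Embedding

variable {A : Type*} {w : A → ℕ} {E : EmbeddingOrder A w} {U R V W : List A}

namespace EmbeddingOrder

theorem weight_pos (E : EmbeddingOrder A w) (a : A) : 0 < w a := by
  simpa using E.weight_lt (E.nil_le [a]) (List.cons_ne_nil a []).symm

theorem le_nil_iff : E.le W [] ↔ W = [] :=
  ⟨fun h => E.le_antisymm h (E.nil_le W), fun h => h ▸ E.le_refl []⟩

theorem le_cons_iff {v : A} :
    E.le W (v :: V) ↔ ∃ X Y, X ++ Y = W ∧ E.le X [v] ∧ E.le Y V := by
  constructor
  · intro h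
    obtain ⟨_ | ⟨X, Xs⟩, hlen, hflat, hle⟩ := (E.le_iff_factor _ _).1 h
    · cases hlen
    · simp only [List.zip_cons_cons, List.forall_mem_cons] at hle
      exact ⟨X, Xs.flatten, hflat, hle.1,
        (E.le_iff_factor _ _).2 ⟨Xs, Nat.succ.inj hlen, rfl, hle.2⟩⟩
  · rintro ⟨X, Y, rfl, hX, hY⟩
    obtain ⟨Ys, hlen, rfl, hle⟩ := (E.le_iff_factor _ _).1 hY
    exact (E.le_iff_factor _ _).2
      ⟨X :: Ys, congrArg Nat.succ hlen, rfl, List.forall_mem_cons.2 ⟨hX, hle⟩⟩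

theorem append_le_append {W₁ W₂ V₁ V₂ : List A} (h₁ : E.le W₁ V₁) (h₂ : E.le W₂ V₂) :
    E.le (W₁ ++ W₂) (V₁ ++ V₂) := by
  induction V₁ generalizing W₁ with
  | nil => rwa [le_nil_iff.1 h₁]
  | cons v V ih =>
    obtain ⟨X, Y, rfl, hX, hY⟩ := le_cons_iff.1 h₁
    exact le_cons_iff.2 ⟨X, Y ++ W₂, (List.append_assoc X Y W₂).symm, hX, ih hY⟩

theorem le_of_sublist (h : W.Sublist V) : E.le W V := by
  induction h with
  | slnil => exact E.le_refl []
  | cons a _ ih => exact append_le_append (E.nil_le [a]) ih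
  | cons_cons a _ ih => exact append_le_append (E.le_refl [a]) ih

theorem le_append_right (h : E.le W V) (T : List A) : E.le W (V ++ T) :=
  E.le_trans h (le_of_sublist (List.sublist_append_left V T))

theorem le_append_left (T : List A) (h : E.le W V) : E.le W (T ++ V) :=
  E.le_trans h (le_of_sublist (List.sublist_append_right T V))

end EmbeddingOrder

open EmbeddingOrder

/-- The last letter of `U` and the first letter of `R` form an incompatible pair: the condition
imposed on consecutive factors of an incompatible factorisation. It holds vacuously when `U` or `R`
is empty. -/
def IncompatBoundary (E : EmbeddingOrder A w) (U R : List A) : Prop :=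
  ∀ a b : A, U.getLast? = some a → R.head? = some b → Incompat E a b

namespace IncompatBoundary

theorem mono {U' R' : List A} (h : IncompatBoundary E U R) (hU : U' <:+ U) (hR : R' <+: R) :
    IncompatBoundary E U' R' := by
  obtain ⟨X, rfl⟩ := hU
  obtain ⟨Y, rfl⟩ := hR
  intro a b ha hb
  exact h a b (by rw [List.getLast?_append, ha, Option.some_or])
    (by rw [List.head?_append, hb, Option.some_or])

theorem eq_nil_or_eq_nil_of_le_letter (h : IncompatBoundary E U R) {v : A}
    (hv : E.le (U ++ R) [v]) : U = [] ∨ R = [] := by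
  rcases U.eq_nil_or_concat' with hU | ⟨U', a, rfl⟩
  · exact .inl hU
  rcases R with _ | ⟨b, R'⟩
  · exact .inr rfl
  have hab : List.Sublist [a, b] ((U' ++ [a]) ++ b :: R') :=
    (List.sublist_append_right U' [a]).append (List.singleton_sublist.2 List.mem_cons_self)
  exact absurd ⟨v, E.le_trans (le_of_sublist hab) hv⟩
    (h a b List.getLast?_concat List.head?_cons)

theorem append_le_iff (h : IncompatBoundary E U R) :
    E.le (U ++ R) V ↔ ∃ V₁ V₂, V₁ ++ V₂ = V ∧ E.le U V₁ ∧ E.le R V₂ := by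
  refine ⟨fun hle => ?_, fun ⟨V₁, V₂, hV, h₁, h₂⟩ => hV ▸ append_le_append h₁ h₂⟩
  induction V generalizing U with
  | nil =>
    obtain ⟨rfl, rfl⟩ := List.append_eq_nil_iff.1 (le_nil_iff.1 hle)
    exact ⟨[], [], rfl, hle, hle⟩
  | cons v V ih =>
    obtain ⟨X, Y, hXY, hX, hY⟩ := le_cons_iff.1 hle
    rcases List.append_eq_append_iff.1 hXY with ⟨U', rfl, rfl⟩ | ⟨R', rfl, rfl⟩
    · obtain ⟨V₁, V₂, rfl, h₁, h₂⟩ :=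
        ih (h.mono (List.suffix_append X U') List.prefix_rfl) hY
      exact ⟨v :: V₁, V₂, rfl, le_cons_iff.2 ⟨X, U', rfl, hX, h₁⟩, h₂⟩
    · have hUR' : IncompatBoundary E U R' := h.mono List.suffix_rfl (List.prefix_append R' Y)
      rcases hUR'.eq_nil_or_eq_nil_of_le_letter hX with rfl | rfl
      · exact ⟨[], v :: V, rfl, E.le_refl [], hle⟩
      · exact ⟨[v], V, rfl, by rwa [List.append_nil] at hX, hY⟩

end IncompatBoundary

theorem minContainer_nil_iff : MinContainer E [] V ↔ V = [] := by
  constructor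
  · intro h
    by_contra hV
    exact h.2 [] List.nil_prefix (Ne.symm hV) (E.nil_le [])
  · rintro rfl
    exact ⟨E.le_refl [], fun P hP hne => absurd (List.prefix_nil.1 hP) hne⟩

theorem exists_prefix_minContainer (h : E.le W V) : ∃ P, P <+: V ∧ MinContainer E W P := by
  induction V using List.reverseRecOn with
  | nil => exact ⟨[], List.prefix_rfl, h, fun P hP hne => absurd (List.prefix_nil.1 hP) hne⟩
  | append_singleton V v ih =>
    by_cases hV : E.le W V
    · obtain ⟨P, hP, hmin⟩ := ih hV
      exact ⟨P, hP.trans (List.prefix_append V [v]), hmin⟩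
    · refine ⟨V ++ [v], List.prefix_rfl, h, fun P hP hne hle => hV ?_⟩
      obtain ⟨T, rfl⟩ := (List.prefix_concat_iff.1 hP).resolve_left hne
      exact le_append_right hle T

theorem MinContainer.eq_of_prefix {P : List A} (h : MinContainer E W V) (hP : P <+: V)
    (hle : E.le W P) : P = V :=
  by_contra fun hne => h.2 P hP hne hle

theorem isAntichain_minContainer (E : EmbeddingOrder A w) (W : List A) :
    IsAntichain (· <+: ·) {V | MinContainer E W V} :=
  fun _ hP _ hV hne hpre => hne (hV.eq_of_prefix hpre hP.1)

theorem IncompatBoundary.minContainer_append {V₁ V₂ : List A} (h : IncompatBoundary E U R)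
    (h₁ : MinContainer E U V₁) (h₂ : MinContainer E R V₂) :
    MinContainer E (U ++ R) (V₁ ++ V₂) := by
  refine ⟨append_le_append h₁.1 h₂.1, fun P hP hne hle => hne ?_⟩
  obtain ⟨P₁, P₂, rfl, hU, hR⟩ := h.append_le_iff.1 hle
  have hV₁ : V₁ <+: P₁ := by
    rcases List.prefix_or_prefix_of_prefix ((List.prefix_append P₁ P₂).trans hP)
      (List.prefix_append V₁ V₂) with hpre | hpre
    · exact h₁.eq_of_prefix hpre hU ▸ List.prefix_rfl
    · exact hpre
  obtain ⟨T, rfl⟩ := hV₁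
  rw [List.append_assoc] at hP ⊢
  rw [h₂.eq_of_prefix ((List.prefix_append_right_inj V₁).1 hP) (le_append_left T hR)]

theorem IncompatBoundary.exists_minContainer_of_append (h : IncompatBoundary E U R)
    (hV : MinContainer E (U ++ R) V) :
    ∃ V₁ V₂, V₁ ++ V₂ = V ∧ MinContainer E U V₁ ∧ MinContainer E R V₂ := by
  obtain ⟨V₁, V₂, rfl, hU, hR⟩ := h.append_le_iff.1 hV.1
  obtain ⟨P, ⟨T, rfl⟩, hP⟩ := exists_prefix_minContainer hU
  rw [List.append_assoc] at hV ⊢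
  refine ⟨P, T ++ V₂, rfl, hP, le_append_left T hR, fun Q hQ hne hle => hne ?_⟩
  exact List.append_cancel_left
    (hV.eq_of_prefix ((List.prefix_append_right_inj P).2 hQ) (append_le_append hP.1 hle))

theorem Iser_eq_IserStar_mul (hfin : ∀ n, {a | w a = n}.Finite) (E : EmbeddingOrder A w)
    (W : List A) : Iser w E W = IserStar w E W * weightSeries (wt w) Set.univ := by
  have hsplit : {V | E.le W V} = Set.image2 (· ++ ·) {P | MinContainer E W P} Set.univ := by
    ext V
    constructor
    · intro h
      obtain ⟨P, ⟨T, hT⟩, hP⟩ := exists_prefix_minContainer h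
      exact ⟨P, hP, T, Set.mem_univ T, hT⟩
    · rintro ⟨P, hP, T, -, rfl⟩
      exact le_append_right hP.1 T
  calc Iser w E W = weightSeries (wt w) {V | E.le W V} := rfl
    _ = weightSeries (wt w) {P | MinContainer E W P} * weightSeries (wt w) Set.univ := by
      rw [hsplit, weightSeries_image2_append E.weight_pos hfin (isAntichain_minContainer E W)]

theorem Iser_mul_one_sub_Aser (hfin : ∀ n, {a | w a = n}.Finite) (E : EmbeddingOrder A w)
    (W : List A) : Iser w E W * (1 - Aser A w) = IserStar w E W := by
  rw [Iser_eq_IserStar_mul hfin, mul_assoc, weightSeries_words_mul_one_sub_Aser E.weight_pos hfin,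
    mul_one]

theorem IserStar_nil (E : EmbeddingOrder A w) : IserStar w E [] = 1 :=
  calc IserStar w E [] = weightSeries (wt w) {V | MinContainer E [] V} := rfl
    _ = weightSeries (wt w) {[]} := by simp only [minContainer_nil_iff]; rfl
    _ = 1 := weightSeries_nil

theorem IncompatBoundary.IserStar_append (h : IncompatBoundary E U R)
    (hfin : ∀ n, {a | w a = n}.Finite) :
    IserStar w E (U ++ R) = IserStar w E U * IserStar w E R := by
  have hsplit : {V | MinContainer E (U ++ R) V} =
      Set.image2 (· ++ ·) {V | MinContainer E U V} {V | MinContainer E R V} := by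
    ext V
    constructor
    · intro hV
      obtain ⟨V₁, V₂, hV, h₁, h₂⟩ := h.exists_minContainer_of_append hV
      exact ⟨V₁, h₁, V₂, h₂, hV⟩
    · rintro ⟨V₁, h₁, V₂, h₂, rfl⟩
      exact h.minContainer_append h₁ h₂
  calc IserStar w E (U ++ R) = weightSeries (wt w) {V | MinContainer E (U ++ R) V} := rfl
    _ = weightSeries (wt w) {V | MinContainer E U V} *
          weightSeries (wt w) {V | MinContainer E R V} := by
      rw [hsplit, weightSeries_image2_append E.weight_pos hfin (isAntichain_minContainer E U)]

namespace IncompatFactorisation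

variable {Ws : List (List A)}

theorem tail (h : IncompatFactorisation E (U :: Ws)) : IncompatFactorisation E Ws :=
  ⟨(List.forall_mem_cons.1 h.1).2, List.IsChain.tail h.2⟩

theorem incompatBoundary_flatten (h : IncompatFactorisation E (U :: Ws)) :
    IncompatBoundary E U Ws.flatten := by
  intro a b ha hb
  rcases Ws with _ | ⟨R, Ws⟩
  · cases hb
  · have hR : R ≠ [] := h.1 R (List.mem_cons_of_mem U List.mem_cons_self)
    rw [List.flatten_cons, List.head?_append_of_ne_nil R hR] at hb
    exact (List.isChain_cons_cons.1 h.2).1 a b ha hb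

theorem IserStar_flatten (h : IncompatFactorisation E Ws) (hfin : ∀ n, {a | w a = n}.Finite) :
    IserStar w E Ws.flatten = (Ws.map (IserStar w E)).prod := by
  induction Ws with
  | nil => exact IserStar_nil E
  | cons U Ws ih =>
    rw [List.flatten_cons, h.incompatBoundary_flatten.IserStar_append hfin, ih h.tail,
      List.map_cons, List.prod_cons]

end IncompatFactorisation

end Embedding

/-- **Proposition `prop-incompatible-factorisation`.**  If `W = W₁W₂⋯W_k` is an
incompatible factorisation, then `I_W(x) = (∏_{i=1}^k I*_{W_i}(x)) / (1 − A(x))`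
as formal power series (stated multiplicatively). -/
theorem Iser_of_incompatFactorisation {A : Type*} (w : A → ℕ)
    (hw : ∀ a, 0 < w a) (hfin : ∀ n, {a : A | w a = n}.Finite)
    (E : EmbeddingOrder A w)
    (Ws : List (List A)) (hne : Ws ≠ []) (hinc : IncompatFactorisation E Ws) :
    Iser w E Ws.flatten * (1 - Aser A w) = (Ws.map (IserStar w E)).prod := by
  rw [Iser_mul_one_sub_Aser hfin, hinc.IserStar_flatten hfin]
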